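/- Let δ21 = X² + 2X + 2, δ22 = X² + 2, δ23 = X² − 2X + 2, δ41 = X⁴ + 2X³ + 2X² + 4X + 4, δ42 = X⁴ + 2X² + 4, and δ83 = X⁸ + 2X⁷ + 2X⁶ − 4X⁴ + 8X² + 16X + 16. Then for every n ≥ 5 and every finite field K with 2^n elements, the number of a ∈ K with T_1(a) = 0, T_2(a) = 0, T_3(a) = 0 and T_5(a) = 0 (with T_4(a) unrestricted) equals 2^{n−4} − (1/16)·(5ρ_n(δ21) + 2ρ_n(δ22) + 2ρ_n(δ23) + 3ρ_n(δ41) + ρ_n(δ42) + ρ_n(δ83)), as complex numbers. -/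

import Mathlib

open Polynomial

/-- For a finite field `K` with `2^n` elements, the `k`-th trace function
`T_k(a) = Σ_S ∏_{i ∈ S} a^(2^i)`, the sum over all `k`-element subsets `S` of `{0,…,n-1}`. -/
noncomputable def traceFn (q n k : ℕ) {K : Type*} [CommRing K] (a : K) : K :=
  ∑ S ∈ Finset.powersetCard k (Finset.range n), ∏ i ∈ S, a ^ (q ^ i)

/-- `ρ_n(γ)`: the sum of the `n`-th powers of the complex roots of `γ ∈ ℤ[X]`,
counted with multiplicity. -/
noncomputable def rho (n : ℕ) (γ : Polynomial ℤ) : ℂ :=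
  ((γ.map (Int.castRingHom ℂ)).roots.map (· ^ n)).sum

noncomputable def d21 : Polynomial ℤ := X ^ 2 + 2 * X + 2
noncomputable def d22 : Polynomial ℤ := X ^ 2 + 2
noncomputable def d23 : Polynomial ℤ := X ^ 2 - 2 * X + 2
noncomputable def d41 : Polynomial ℤ := X ^ 4 + 2 * X ^ 3 + 2 * X ^ 2 + 4 * X + 4
noncomputable def d42 : Polynomial ℤ := X ^ 4 + 2 * X ^ 2 + 4
noncomputable def d83 : Polynomial ℤ :=
  X ^ 8 + 2 * X ^ 7 + 2 * X ^ 6 - 4 * X ^ 4 + 8 * X ^ 2 + 16 * X + 16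

set_option linter.unusedSimpArgs false


/-- The product of X and the derivative of F equals F times s. -/
def LD (F s : PowerSeries ℂ) : Prop :=
  PowerSeries.X * PowerSeries.derivative ℂ F = F * s

lemma LD.mul {F s G t : PowerSeries ℂ} (h1 : LD F s) (h2 : LD G t) : LD (F * G) (s + t) := by
  unfold LD at *
  rw [Derivation.leibniz]
  simp only [smul_eq_mul]
  linear_combination G * h1 + F * h2

lemma LD.unique {F s t : PowerSeries ℂ} (hF : F ≠ 0) (h1 : LD F s) (h2 : LD F t) : s = t := by
  unfold LD at *
  exact mul_left_cancel₀ hF (h1.symm.trans h2)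

lemma LD_one : LD 1 0 := by simp [LD]

noncomputable def pser (s : Multiset ℂ) : PowerSeries ℂ :=
  PowerSeries.mk fun n => if n = 0 then 0 else (s.map (· ^ n)).sum

lemma LD_lin (α : ℂ) : LD (1 - PowerSeries.C α * PowerSeries.X)
    (-PowerSeries.mk fun n => if n = 0 then 0 else α ^ n) := by
  unfold LD
  ext n
  rcases n with _ | n
  · simp [sub_mul]
  · rw [PowerSeries.coeff_succ_X_mul, PowerSeries.coeff_derivative]
    rw [sub_mul, mul_assoc, map_sub, map_sub, PowerSeries.coeff_C_mul, PowerSeries.coeff_C_mul,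
      PowerSeries.coeff_succ_X_mul]
    rcases n with _ | n
    · simp
    · simp [PowerSeries.coeff_one, PowerSeries.coeff_X, pow_succ]
      ring

lemma LD_multiset (s : Multiset ℂ) :
    LD ((s.map fun α => 1 - PowerSeries.C α * PowerSeries.X).prod) (-pser s) := by
  induction s using Multiset.induction_on with
  | empty =>
    have : pser 0 = 0 := by ext n; simp [pser]
    simpa [this] using LD_one
  | cons a s ih =>
    have : -pser (a ::ₘ s) = (-PowerSeries.mk fun n => if n = 0 then 0 else a ^ n) + (-pser s) := by
      ext n
      simp only [pser, map_add, map_neg, PowerSeries.coeff_mk, Multiset.map_cons, Multiset.sum_cons]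
      split_ifs <;> ring
    rw [this, Multiset.map_cons, Multiset.prod_cons]
    exact (LD_lin a).mul ih

lemma reverse_prod_lin (s : Multiset ℂ) :
    (((s.map fun α => X - C α).prod.reverse : ℂ[X]) : PowerSeries ℂ) =
      (s.map fun α => 1 - PowerSeries.C α * PowerSeries.X).prod := by
  induction s using Multiset.induction_on with
  | empty =>
    have : (1 : ℂ[X]).reverse = 1 := by simpa using reverse_C (1 : ℂ)
    simp [this]
  | cons a s ih =>
    rw [Multiset.map_cons, Multiset.prod_cons, Multiset.map_cons, Multiset.prod_cons,
      reverse_mul_of_domain, Polynomial.coe_mul, ih]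
    congr 1
    have : (X - C a : ℂ[X]).reverse = 1 - C a * X := by
      rw [reverse, natDegree_X_sub_C, sub_eq_add_neg, ← C_neg, reflect_add, reflect_C]
      have h1 : reflect 1 (X : ℂ[X]) = 1 := by
        simp
      rw [h1]; simp; ring
    rw [this]; simp

noncomputable def rser (γ : Polynomial ℤ) : PowerSeries ℂ :=
  PowerSeries.mk fun n => if n = 0 then 0 else rho n γ

lemma LD_rho (γ : ℤ[X]) (hγ : γ.Monic) :
    LD ((γ.map (Int.castRingHom ℂ)).reverse : ℂ[X]) (-rser γ) := by
  have h := LD_multiset (γ.map (Int.castRingHom ℂ)).roots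
  rw [← reverse_prod_lin, ← Polynomial.Splits.eq_prod_roots_of_monic (IsAlgClosed.splits _) (hγ.map _)] at h
  exact h


lemma rev_aux (d : ℕ) (p : ℂ[X]) (hd : p.natDegree = d) (q : ℂ[X])
   (h : reflect d p = q) : p.reverse = q := by rw [reverse, hd, h]

lemma refl_term (N k : ℕ) (c : ℂ) (h : k ≤ N) :
    reflect N (C c * X ^ k) = C c * X ^ (N - k) := by
  rw [reflect_C_mul_X_pow, revAt_le h]

lemma LD_d21 : LD ((1) * PowerSeries.X ^ 0 + (2) * PowerSeries.X ^ 1 + (2) * PowerSeries.X ^ 2) (-rser d21) := by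
  have hm : d21.Monic := by unfold d21; monicity!
  convert LD_rho d21 hm using 1
  have h : d21.map (Int.castRingHom ℂ) = C (1) * X ^ 2 + C (2) * X ^ 1 + C (2) * X ^ 0 := by
    simp [d21, map_ofNat C, sub_eq_add_neg]
  rw [h, rev_aux 2 _ (by compute_degree!) _ rfl]
  simp only [reflect_add, refl_term, Nat.reduceLeDiff, le_refl, Nat.reduceSub]
  simp only [Polynomial.coe_add, Polynomial.coe_mul, Polynomial.coe_C, Polynomial.coe_pow, Polynomial.coe_X]
  simp only [map_neg, map_ofNat, map_one]

lemma LD_d22 : LD ((1) * PowerSeries.X ^ 0 + (2) * PowerSeries.X ^ 2) (-rser d22) := by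
  have hm : d22.Monic := by unfold d22; monicity!
  convert LD_rho d22 hm using 1
  have h : d22.map (Int.castRingHom ℂ) = C (1) * X ^ 2 + C (2) * X ^ 0 := by
    simp [d22, map_ofNat C, sub_eq_add_neg]
  rw [h, rev_aux 2 _ (by compute_degree!) _ rfl]
  simp only [reflect_add, refl_term, Nat.reduceLeDiff, le_refl, Nat.reduceSub]
  simp only [Polynomial.coe_add, Polynomial.coe_mul, Polynomial.coe_C, Polynomial.coe_pow, Polynomial.coe_X]
  simp only [map_neg, map_ofNat, map_one]

lemma LD_d23 : LD ((1) * PowerSeries.X ^ 0 + (-2) * PowerSeries.X ^ 1 + (2) * PowerSeries.X ^ 2) (-rser d23) := by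
  have hm : d23.Monic := by unfold d23; monicity!
  convert LD_rho d23 hm using 1
  have h : d23.map (Int.castRingHom ℂ) = C (1) * X ^ 2 + C (-2) * X ^ 1 + C (2) * X ^ 0 := by
    simp [d23, map_ofNat C, sub_eq_add_neg]
  rw [h, rev_aux 2 _ (by compute_degree!) _ rfl]
  simp only [reflect_add, refl_term, Nat.reduceLeDiff, le_refl, Nat.reduceSub]
  simp only [Polynomial.coe_add, Polynomial.coe_mul, Polynomial.coe_C, Polynomial.coe_pow, Polynomial.coe_X]
  simp only [map_neg, map_ofNat, map_one]

lemma LD_d41 : LD ((1) * PowerSeries.X ^ 0 + (2) * PowerSeries.X ^ 1 + (2) * PowerSeries.X ^ 2 + (4) * PowerSeries.X ^ 3 + (4) * PowerSeries.X ^ 4) (-rser d41) := by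
  have hm : d41.Monic := by unfold d41; monicity!
  convert LD_rho d41 hm using 1
  have h : d41.map (Int.castRingHom ℂ) = C (1) * X ^ 4 + C (2) * X ^ 3 + C (2) * X ^ 2 + C (4) * X ^ 1 + C (4) * X ^ 0 := by
    simp [d41, map_ofNat C, sub_eq_add_neg]
  rw [h, rev_aux 4 _ (by compute_degree!) _ rfl]
  simp only [reflect_add, refl_term, Nat.reduceLeDiff, le_refl, Nat.reduceSub]
  simp only [Polynomial.coe_add, Polynomial.coe_mul, Polynomial.coe_C, Polynomial.coe_pow, Polynomial.coe_X]
  simp only [map_neg, map_ofNat, map_one]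

lemma LD_d42 : LD ((1) * PowerSeries.X ^ 0 + (2) * PowerSeries.X ^ 2 + (4) * PowerSeries.X ^ 4) (-rser d42) := by
  have hm : d42.Monic := by unfold d42; monicity!
  convert LD_rho d42 hm using 1
  have h : d42.map (Int.castRingHom ℂ) = C (1) * X ^ 4 + C (2) * X ^ 2 + C (4) * X ^ 0 := by
    simp [d42, map_ofNat C, sub_eq_add_neg]
  rw [h, rev_aux 4 _ (by compute_degree!) _ rfl]
  simp only [reflect_add, refl_term, Nat.reduceLeDiff, le_refl, Nat.reduceSub]
  simp only [Polynomial.coe_add, Polynomial.coe_mul, Polynomial.coe_C, Polynomial.coe_pow, Polynomial.coe_X]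
  simp only [map_neg, map_ofNat, map_one]

lemma LD_d83 : LD ((1) * PowerSeries.X ^ 0 + (2) * PowerSeries.X ^ 1 + (2) * PowerSeries.X ^ 2 + (-4) * PowerSeries.X ^ 4 + (8) * PowerSeries.X ^ 6 + (16) * PowerSeries.X ^ 7 + (16) * PowerSeries.X ^ 8) (-rser d83) := by
  have hm : d83.Monic := by unfold d83; monicity!
  convert LD_rho d83 hm using 1
  have h : d83.map (Int.castRingHom ℂ) = C (1) * X ^ 8 + C (2) * X ^ 7 + C (2) * X ^ 6 + C (-4) * X ^ 4 + C (8) * X ^ 2 + C (16) * X ^ 1 + C (16) * X ^ 0 := by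
    simp [d83, map_ofNat C, sub_eq_add_neg]
  rw [h, rev_aux 8 _ (by compute_degree!) _ rfl]
  simp only [reflect_add, refl_term, Nat.reduceLeDiff, le_refl, Nat.reduceSub]
  simp only [Polynomial.coe_add, Polynomial.coe_mul, Polynomial.coe_C, Polynomial.coe_pow, Polynomial.coe_X]
  simp only [map_neg, map_ofNat, map_one]


open Classical in
/-- The nonzero polynomials over `ZMod 2` of degree `m`. -/
noncomputable def DD : ℕ → Finset (ZMod 2)[X]
  | 0 => {1}
  | (m + 1) => (DD m ×ˢ (Finset.univ : Finset (ZMod 2))).image (fun p => X * p.1 + C p.2)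

lemma zmod2_ne_zero {x : ZMod 2} (h : x ≠ 0) : x = 1 := by
  revert x; decide

lemma monic_of_ne {f : (ZMod 2)[X]} (h : f ≠ 0) : f.Monic :=
  zmod2_ne_zero (leadingCoeff_ne_zero.2 h)

lemma natDegree_step {g : (ZMod 2)[X]} (hg : g ≠ 0) (b : ZMod 2) :
    (X * g + C b).natDegree = g.natDegree + 1 := by
  rw [natDegree_add_C, mul_comm, natDegree_mul_X hg]

lemma mem_DD {m : ℕ} {f : (ZMod 2)[X]} : f ∈ DD m ↔ f ≠ 0 ∧ f.natDegree = m := by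
  classical
  induction m generalizing f with
  | zero =>
    simp only [DD, Finset.mem_singleton]
    constructor
    · rintro rfl; simp
    · rintro ⟨h0, h1⟩
      exact (Polynomial.Monic.natDegree_eq_zero (monic_of_ne h0)).1 h1
  | succ m ih =>
    simp only [DD, Finset.mem_image, Finset.mem_product, Finset.mem_univ, and_true, Prod.exists, ih]
    constructor
    · rintro ⟨g, b, ⟨hg, hm⟩, rfl⟩
      have := natDegree_step hg b
      refine ⟨?_, by rw [this, hm]⟩
      intro h
      rw [h] at this; simp at this
    · rintro ⟨h0, h1⟩
      have hf : X * f.divX + C (f.coeff 0) = f := X_mul_divX_add f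
      refine ⟨f.divX, f.coeff 0, ⟨?_, ?_⟩, hf⟩
      · intro h
        rw [divX_eq_zero_iff] at h
        rw [h] at h1; simp at h1
      · rw [natDegree_divX_eq_natDegree_tsub_one, h1]; rfl

lemma sum_DD_succ {A : Type*} [AddCommMonoid A] (m : ℕ) (F : (ZMod 2)[X] → A) :
    ∑ f ∈ DD (m + 1), F f = ∑ g ∈ DD m, ∑ b : ZMod 2, F (X * g + C b) := by
  classical
  rw [DD, Finset.sum_image, Finset.sum_product]
  rintro ⟨g, b⟩ - ⟨g', b'⟩ - h
  have h1 := congrArg (fun p => coeff p 0) h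
  simp at h1
  simp only [h1, add_left_inj] at h
  simp [h1, mul_left_cancel₀ X_ne_zero h]

open Classical in
/-- irreducible polynomials of degree `d` -/
noncomputable def IR (d : ℕ) : Finset (ZMod 2)[X] := (DD d).filter Irreducible

lemma mem_IR {m : ℕ} {f : (ZMod 2)[X]} : f ∈ IR m ↔ Irreducible f ∧ f.natDegree = m := by
  classical
  simp only [IR, Finset.mem_filter, mem_DD]
  exact ⟨fun h => ⟨h.2, h.1.2⟩, fun h => ⟨⟨h.1.ne_zero, h.2⟩, h.1⟩⟩

open UniqueFactorizationMonoid in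
lemma degree_formula {n : ℕ} {f : (ZMod 2)[X]} (hf : f ∈ DD n) :
    n = ∑ d ∈ Finset.Icc 1 n, ∑ P ∈ IR d, ∑ k ∈ Finset.Icc 1 n,
      (open Classical in if P ^ k ∣ f then d else 0) := by
  classical
  obtain ⟨h0, hn⟩ := mem_DD.1 hf
  have hcount : ∀ P, Irreducible P → ∑ k ∈ Finset.Icc 1 n, (if P ^ k ∣ f then P.natDegree else 0)
      = (normalizedFactors f).count P * P.natDegree := by
    intro P hP
    have hnorm : normalize P = P := (monic_of_ne hP.ne_zero).normalize_eq_self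
    have hk : ∀ k, P ^ k ∣ f ↔ k ≤ (normalizedFactors f).count P := by
      intro k
      rw [pow_dvd_iff_le_emultiplicity, emultiplicity_eq_count_normalizedFactors hP h0, hnorm]
      exact Nat.cast_le
    have hle : (normalizedFactors f).count P ≤ n := by
      have h1 : P ^ (normalizedFactors f).count P ∣ f := (hk _).2 le_rfl
      have h2 := natDegree_le_of_dvd h1 h0
      rw [natDegree_pow, hn] at h2
      have := hP.natDegree_pos
      nlinarith
    simp only [hk]
    rw [← Finset.sum_filter, Finset.sum_const, smul_eq_mul]
    congr 1
    have : {a ∈ Finset.Icc 1 n | a ≤ (normalizedFactors f).count P}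
        = Finset.Icc 1 ((normalizedFactors f).count P) := by
      ext a; simp; omega
    rw [this]; simp
  have hprod : (normalizedFactors f).prod = f := by
    have h1 := prod_normalizedFactors h0
    have h2 : (normalizedFactors f).prod ≠ 0 := by
      intro h; rw [h] at h1; exact h0 (associated_zero_iff_eq_zero _ |>.1 h1.symm)
    exact eq_of_monic_of_associated (monic_of_ne h2) (monic_of_ne h0) h1
  have hdeg : n = ∑ P ∈ (normalizedFactors f).toFinset,
      (normalizedFactors f).count P * P.natDegree := by
    conv_lhs => rw [← hn, ← hprod]
    rw [natDegree_multiset_prod _ (zero_notMem_normalizedFactors f), Finset.sum_multiset_map_count]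
    simp
  conv_lhs => rw [hdeg]
  have e1 : ∀ d ∈ Finset.Icc 1 n, ∑ P ∈ IR d, ∑ k ∈ Finset.Icc 1 n, (if P ^ k ∣ f then d else 0)
      = ∑ P ∈ IR d, (normalizedFactors f).count P * P.natDegree := by
    intro d _
    refine Finset.sum_congr rfl fun P hP => ?_
    obtain ⟨h1, h2⟩ := mem_IR.1 hP
    rw [← hcount P h1, h2]
  rw [Finset.sum_congr rfl e1, ← Finset.sum_biUnion]
  · refine Finset.sum_subset ?_ ?_
    · intro P hP
      rw [Multiset.mem_toFinset] at hP
      have hi := irreducible_of_normalized_factor P hP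
      simp only [Finset.mem_biUnion, Finset.mem_Icc, mem_IR]
      refine ⟨P.natDegree, ⟨hi.natDegree_pos, ?_⟩, hi, rfl⟩
      rw [← hn]
      exact natDegree_le_of_dvd (dvd_of_mem_normalizedFactors hP) h0
    · intro P _ hP
      rw [Multiset.mem_toFinset] at hP
      rw [Multiset.count_eq_zero_of_notMem hP, zero_mul]
  · intro a _ b _ hab
    rw [Function.onFun, Finset.disjoint_left]
    intro P h1 h2
    exact hab ((mem_IR.1 h1).2.symm.trans (mem_IR.1 h2).2)

variable {A : Type*} [CommRing A]

noncomputable def cc (χ : (ZMod 2)[X] → A) (m : ℕ) : A := ∑ f ∈ DD m, χ f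

noncomputable def SS (χ : (ZMod 2)[X] → A) (j : ℕ) : A :=
  ∑ p ∈ j.divisorsAntidiagonal, ∑ P ∈ IR p.1, (p.1 : A) * χ P ^ p.2

structure IsMult (χ : (ZMod 2)[X] → A) : Prop where
  one : χ 1 = 1
  mul : ∀ f g, f ≠ 0 → g ≠ 0 → χ (f * g) = χ f * χ g

lemma IsMult.pow {χ : (ZMod 2)[X] → A} (h : IsMult χ) {f : (ZMod 2)[X]} (hf : f ≠ 0) (k : ℕ) :
    χ (f ^ k) = χ f ^ k := by
  induction k with
  | zero => simp [h.one]
  | succ k ih => rw [pow_succ, h.mul _ _ (pow_ne_zero _ hf) hf, ih, pow_succ]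

lemma sum_dvd {χ : (ZMod 2)[X] → A} (h : IsMult χ) {d n k : ℕ} {P : (ZMod 2)[X]} (hP : P ∈ IR d) :
    ∑ f ∈ DD n, (open Classical in if P ^ k ∣ f then (d : A) * χ f else 0) =
      if d * k ≤ n then (d : A) * χ P ^ k * cc χ (n - d * k) else 0 := by
  classical
  obtain ⟨hi, hd⟩ := mem_IR.1 hP
  have hPk : P ^ k ≠ 0 := pow_ne_zero _ hi.ne_zero
  rw [← Finset.sum_filter]
  split_ifs with hle
  · rw [cc, Finset.mul_sum]
    symm
    refine Finset.sum_bij (fun g _ => P ^ k * g) ?_ ?_ ?_ ?_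
    · intro g hg
      obtain ⟨h0, h1⟩ := mem_DD.1 hg
      rw [Finset.mem_filter, mem_DD]
      refine ⟨⟨mul_ne_zero hPk h0, ?_⟩, dvd_mul_right _ _⟩
      rw [natDegree_mul hPk h0, natDegree_pow, hd, h1, mul_comm]; omega
    · intro a _ b _ hab
      exact mul_left_cancel₀ hPk hab
    · intro f hf
      rw [Finset.mem_filter, mem_DD] at hf
      obtain ⟨⟨h0, h1⟩, g, rfl⟩ := hf
      have hg : g ≠ 0 := right_ne_zero_of_mul h0
      refine ⟨g, ?_, rfl⟩
      rw [natDegree_mul hPk hg, natDegree_pow, hd, mul_comm] at h1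
      exact mem_DD.2 ⟨hg, by omega⟩
    · intro g hg
      rw [h.mul _ _ hPk (mem_DD.1 hg).1, h.pow hi.ne_zero, mul_assoc]
  · apply Finset.sum_eq_zero
    intro f hf
    rw [Finset.mem_filter, mem_DD] at hf
    exfalso
    apply hle
    have := natDegree_le_of_dvd hf.2 hf.1.1
    rw [natDegree_pow, hd, hf.1.2, mul_comm] at this
    exact this

lemma newton {χ : (ZMod 2)[X] → A} (h : IsMult χ) (n : ℕ) :
    (n : A) * cc χ n = ∑ p ∈ Finset.HasAntidiagonal.antidiagonal n, cc χ p.1 * SS χ p.2 := by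
  classical
  have h1 : (n : A) * cc χ n = ∑ d ∈ Finset.Icc 1 n, ∑ k ∈ Finset.Icc 1 n, ∑ P ∈ IR d,
      if d * k ≤ n then (d : A) * χ P ^ k * cc χ (n - d * k) else 0 := by
    have : ∀ f ∈ DD n, (n : A) * χ f = ∑ d ∈ Finset.Icc 1 n, ∑ P ∈ IR d, ∑ k ∈ Finset.Icc 1 n,
        if P ^ k ∣ f then (d : A) * χ f else 0 := by
      intro f hf
      conv_lhs => rw [degree_formula hf]
      push_cast
      simp only [Finset.sum_mul, ite_mul, zero_mul]
    rw [cc, Finset.mul_sum, Finset.sum_congr rfl this, Finset.sum_comm]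
    refine Finset.sum_congr rfl fun d _ => ?_
    rw [Finset.sum_comm, Finset.sum_comm (s := Finset.Icc 1 n)]
    refine Finset.sum_congr rfl fun P hP => ?_
    rw [Finset.sum_comm]
    refine Finset.sum_congr rfl fun k _ => ?_
    rw [sum_dvd h hP]
  rw [h1, ← Finset.sum_product']
  have h2 : ∀ p : ℕ × ℕ, (∑ P ∈ IR p.1, if p.1 * p.2 ≤ n then
      (p.1 : A) * χ P ^ p.2 * cc χ (n - p.1 * p.2) else 0) =
      if p.1 * p.2 ≤ n then (∑ P ∈ IR p.1, (p.1 : A) * χ P ^ p.2) * cc χ (n - p.1 * p.2) else 0 := by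
    intro p
    split_ifs
    · rw [Finset.sum_mul]
    · simp
  simp only [h2]
  rw [← Finset.sum_filter]
  simp only [SS, Finset.mul_sum (s := Nat.divisorsAntidiagonal _)]
  rw [Finset.sum_sigma']
  refine Finset.sum_bij' (fun p _ => ⟨(n - p.1 * p.2, p.1 * p.2), p⟩) (fun q _ => q.2) ?_ ?_ ?_ ?_ ?_
  · rintro ⟨d, k⟩ hp
    simp only [Finset.mem_filter, Finset.mem_product, Finset.mem_Icc] at hp
    simp only [Finset.mem_sigma, Finset.HasAntidiagonal.mem_antidiagonal, Nat.mem_divisorsAntidiagonal]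
    refine ⟨by omega, trivial, ?_⟩
    have : d ≠ 0 := by omega
    have : k ≠ 0 := by omega
    positivity
  · rintro ⟨⟨i, j⟩, d, k⟩ hp
    simp only [Finset.mem_sigma, Finset.HasAntidiagonal.mem_antidiagonal, Nat.mem_divisorsAntidiagonal] at hp
    simp only [Finset.mem_filter, Finset.mem_product, Finset.mem_Icc]
    obtain ⟨h3, h4, h5⟩ := hp
    subst h4
    have hd : d ≠ 0 := left_ne_zero_of_mul h5
    have hk : k ≠ 0 := right_ne_zero_of_mul h5
    have : d ≤ d * k := Nat.le_mul_of_pos_right _ (by omega)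
    have : k ≤ d * k := Nat.le_mul_of_pos_left _ (by omega)
    omega
  · intro p _; rfl
  · rintro ⟨⟨i, j⟩, d, k⟩ hp
    simp only [Finset.mem_sigma, Finset.HasAntidiagonal.mem_antidiagonal, Nat.mem_divisorsAntidiagonal] at hp
    obtain ⟨h3, h4, h5⟩ := hp
    subst h4
    have : n - d * k = i := by omega
    simp [this]
  · rintro p _
    ring
section field
variable {K : Type} [Field K] [Fintype K] [Algebra (ZMod 2) K]

lemma pow_fix_iff (a : K) (k : ℕ) : a ^ 2 ^ k = a ↔ (minpoly (ZMod 2) a).natDegree ∣ k := by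
  have hintg : IsIntegral (ZMod 2) a := Algebra.IsIntegral.isIntegral a
  rw [(minpoly.irreducible hintg).natDegree_dvd_iff_dvd_X_pow_card_pow_sub_X, minpoly.dvd_iff]
  simp [sub_eq_zero]

lemma minpoly_prod (a : K) : (minpoly (ZMod 2) a).map (algebraMap (ZMod 2) K) =
    ∏ i ∈ Finset.range (minpoly (ZMod 2) a).natDegree, (X - C (a ^ 2 ^ i)) := by
  classical
  have hintg : IsIntegral (ZMod 2) a := Algebra.IsIntegral.isIntegral a
  have : CharP K 2 := charP_of_injective_algebraMap (algebraMap (ZMod 2) K).injective 2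
  set d := (minpoly (ZMod 2) a).natDegree with hd
  have hinj : Set.InjOn (fun i => a ^ 2 ^ i) (Finset.range d : Set ℕ) := by
    have key : ∀ i j, i < j → j < d → a ^ 2 ^ i ≠ a ^ 2 ^ j := by
      intro i j hij hj h
      have h1 : (a ^ 2 ^ (j - i)) ^ 2 ^ i = a ^ 2 ^ i := by
        rw [← pow_mul, ← pow_add, Nat.sub_add_cancel hij.le, h]
      have h2 : a ^ 2 ^ (j - i) = a := iterateFrobenius_inj K 2 i (by
        simpa [iterateFrobenius_def] using h1)
      have := (pow_fix_iff a _).1 h2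
      have := Nat.le_of_dvd (by omega) this
      omega
    intro i hi j hj h
    simp only [Finset.coe_range, Set.mem_Iio] at hi hj
    rcases lt_trichotomy i j with hlt | heq | hgt
    · exact absurd h (key i j hlt hj)
    · exact heq
    · exact absurd h.symm (key j i hgt hi)
  have hmon := (minpoly.monic hintg).map (algebraMap (ZMod 2) K)
  have hroot : ∀ i, ((minpoly (ZMod 2) a).map (algebraMap (ZMod 2) K)).IsRoot (a ^ 2 ^ i) := by
    intro i
    rw [IsRoot.def, eval_map_algebraMap]
    induction i with
    | zero => simp
    | succ i ih =>
      have : a ^ 2 ^ (i + 1) = (FiniteField.frobeniusAlgHom (ZMod 2) K) (a ^ 2 ^ i) := by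
        simp [pow_succ, pow_mul]
      rw [this, aeval_algHom_apply, ih, map_zero]
  refine eq_of_monic_of_dvd_of_natDegree_le
    (monic_prod_of_monic _ _ fun i _ => monic_X_sub_C _) hmon ?_ ?_
  · apply Finset.prod_dvd_of_coprime
    · intro i hi j hj hij
      exact isCoprime_X_sub_C_of_isUnit_sub
        (IsUnit.mk0 _ (sub_ne_zero.2 fun h => hij (hinj hi hj h)))
    · intro i _
      exact dvd_iff_isRoot.2 (hroot i)
  · rw [natDegree_map, natDegree_prod_of_monic _ _ fun i _ => monic_X_sub_C _]
    simp only [natDegree_X_sub_C]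
    simp [← hd]

lemma prod_range_mul_period {M : Type*} [CommMonoid M] (f : ℕ → M) (d k : ℕ)
    (h : ∀ i, f (i + d) = f i) : ∏ i ∈ Finset.range (d * k), f i = (∏ i ∈ Finset.range d, f i) ^ k := by
  induction k with
  | zero => simp
  | succ k ih =>
    have h2 : ∀ k i, f (d * k + i) = f i := by
      intro k
      induction k with
      | zero => simp
      | succ k ih => intro i; rw [← ih i, ← h (d * k + i)]; congr 1; ring
    rw [mul_add, mul_one, Finset.prod_range_add, ih, pow_succ]
    simp only [h2]

lemma deg_dvd {n : ℕ} (hK : Fintype.card K = 2 ^ n) (a : K) :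
    (minpoly (ZMod 2) a).natDegree ∣ n := by
  rw [← pow_fix_iff, ← hK, FiniteField.pow_card]

lemma full_prod {n : ℕ} (hK : Fintype.card K = 2 ^ n) (a : K) :
    ((minpoly (ZMod 2) a) ^ (n / (minpoly (ZMod 2) a).natDegree)).map (algebraMap (ZMod 2) K) =
    ∏ i ∈ Finset.range n, (X + C (a ^ 2 ^ i)) := by
  have : CharP K 2 := charP_of_injective_algebraMap (algebraMap (ZMod 2) K).injective 2
  rw [Polynomial.map_pow, minpoly_prod, ← prod_range_mul_period, Nat.mul_div_cancel' (deg_dvd hK a)]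
  · refine Finset.prod_congr rfl fun i _ => ?_
    rw [sub_eq_add_neg, ← C_neg, CharTwo.neg_eq]
  · intro i
    rw [add_comm, pow_add, pow_mul, (pow_fix_iff a _).2 dvd_rfl]

/-- the polynomial of degree `n` attached to `a` -/
noncomputable def qq (n : ℕ) (a : K) : (ZMod 2)[X] :=
  (minpoly (ZMod 2) a) ^ (n / (minpoly (ZMod 2) a).natDegree)

lemma qq_trace {n k : ℕ} (hK : Fintype.card K = 2 ^ n) (hk : k ≤ n) (a : K) :
    algebraMap (ZMod 2) K ((qq n a).reverse.coeff k) = traceFn 2 n k a := by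
  have h := full_prod hK a
  have hdeg : (qq n a).natDegree = n := by
    rw [qq, natDegree_pow, mul_comm, Nat.mul_div_cancel' (deg_dvd hK a)]
  rw [coeff_reverse, hdeg, revAt_le hk, ← coeff_map, qq, h,
    Finset.prod_X_add_C_coeff _ _ (by simp)]
  simp [traceFn, Nat.sub_sub_self hk]

lemma sum_minpoly {n : ℕ} (hn : n ≠ 0) (hK : Fintype.card K = 2 ^ n) {A : Type*} [CommRing A]
    {χ : (ZMod 2)[X] → A} (h : IsMult χ) : ∑ a : K, χ (qq n a) = SS χ n := by
  classical
  have hintg : ∀ a : K, IsIntegral (ZMod 2) a := fun a => Algebra.IsIntegral.isIntegral a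
  have h1 : ∀ a : K, χ (qq n a) =
      χ (minpoly (ZMod 2) a) ^ (n / (minpoly (ZMod 2) a).natDegree) := by
    intro a
    rw [qq, h.pow (minpoly.ne_zero (hintg a))]
  simp only [h1]
  rw [SS, Nat.sum_divisorsAntidiagonal (fun d k => ∑ P ∈ IR d, (d : A) * χ P ^ k)]
  have h2 : ∀ d ∈ n.divisors, ∑ P ∈ IR d, (d : A) * χ P ^ (n / d) =
      ∑ P ∈ IR d, (P.natDegree : A) * χ P ^ (n / P.natDegree) := by
    intro d _
    refine Finset.sum_congr rfl fun P hP => ?_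
    rw [(mem_IR.1 hP).2]
  rw [Finset.sum_congr rfl h2, ← Finset.sum_biUnion]
  · rw [← Finset.sum_fiberwise_of_maps_to (s := (Finset.univ : Finset K))
      (t := n.divisors.biUnion IR) (g := fun a => minpoly (ZMod 2) a)]
    · refine Finset.sum_congr rfl fun P hP => ?_
      simp only [Finset.mem_biUnion, Nat.mem_divisors, mem_IR] at hP
      obtain ⟨d, ⟨hdn, -⟩, hi, hd⟩ := hP
      have hm := monic_of_ne hi.ne_zero
      have e : ∀ a ∈ Finset.univ.filter (fun a : K => minpoly (ZMod 2) a = P),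
          χ (minpoly (ZMod 2) a) ^ (n / (minpoly (ZMod 2) a).natDegree) = χ P ^ (n / P.natDegree) := by
        intro a ha
        rw [(Finset.mem_filter.1 ha).2]
      rw [Finset.sum_congr rfl e, Finset.sum_const, nsmul_eq_mul]
      congr 2
      have hs : Splits (P.map (algebraMap (ZMod 2) K)) := by
        have hdv := hi.natDegree_dvd_iff_dvd_X_pow_card_pow_sub_X.1 (hd ▸ hdn)
        rw [Nat.card_zmod] at hdv
        have h3 := FiniteField.splits_X_pow_card_sub_X (K := K) 2
        refine Splits.of_dvd ?_ ?_ (Polynomial.map_dvd (algebraMap (ZMod 2) K) hdv)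
        · rw [hK] at h3
          simpa using h3
        · exact map_ne_zero (FiniteField.X_pow_card_pow_sub_X_ne_zero _ hn (by norm_num))
      rw [← card_rootSet_eq_natDegree (K := K) (PerfectField.separable_of_irreducible hi) hs,
        Fintype.card_subtype]
      congr 1
      ext a
      simp only [Finset.mem_filter, Finset.mem_univ, true_and, mem_rootSet]
      constructor
      · rintro rfl
        exact ⟨hi.ne_zero, minpoly.aeval _ _⟩
      · rintro ⟨-, ha⟩
        exact (minpoly.eq_of_irreducible_of_monic hi ha hm).symm
    · intro a _
      simp only [Finset.mem_biUnion, Nat.mem_divisors, mem_IR]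
      exact ⟨_, ⟨deg_dvd hK a, hn⟩, minpoly.irreducible (hintg a), rfl⟩
  · intro a _ b _ hab
    rw [Function.onFun, Finset.disjoint_left]
    intro P h1 h2
    exact hab ((mem_IR.1 h1).2.symm.trans (mem_IR.1 h2).2)

end field
noncomputable def EE (f : (ZMod 2)[X]) : ℕ → ZMod 2 := fun k => f.reverse.coeff k

def alp (e1 e2 : ZMod 2) : GaussianInt := ⟨0, 1⟩ ^ (e1.val + 2 * e2.val)
def bet (e1 e2 e3 : ZMod 2) : GaussianInt := (-1) ^ (e3 + e1 * e2).val
def gam (e1 e2 e3 e4 e5 : ZMod 2) : GaussianInt := (-1) ^ (e5 + e1 * e3 + e2 * e3 + e1 * e4).val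

def chi (a b c : ℕ) (e1 e2 e3 e4 e5 : ZMod 2) : GaussianInt :=
  alp e1 e2 ^ a * bet e1 e2 e3 ^ b * gam e1 e2 e3 e4 e5 ^ c

def hh (a b c : ℕ) (x : ℕ → ZMod 2) : GaussianInt := chi a b c (x 1) (x 2) (x 3) (x 4) (x 5)

noncomputable def cchi (a b c : ℕ) (f : (ZMod 2)[X]) : ℂ := GaussianInt.toComplex (hh a b c (EE f))

lemma alp_mul : ∀ a1 a2 b1 b2 : ZMod 2,
    alp (a1 + b1) (a2 + a1 * b1 + b2) = alp a1 a2 * alp b1 b2 := by decide +kernel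

lemma bet_mul : ∀ a1 a2 a3 b1 b2 b3 : ZMod 2,
    bet (a1 + b1) (a2 + a1 * b1 + b2) (a3 + a2 * b1 + a1 * b2 + b3)
      = bet a1 a2 a3 * bet b1 b2 b3 := by decide +kernel

lemma gam_mul : ∀ a1 a2 a3 a4 a5 b1 b2 b3 b4 b5 : ZMod 2,
    gam (a1 + b1) (a2 + a1 * b1 + b2) (a3 + a2 * b1 + a1 * b2 + b3)
      (a4 + a3 * b1 + a2 * b2 + a1 * b3 + b4)
      (a5 + a4 * b1 + a3 * b2 + a2 * b3 + a1 * b4 + b5)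
      = gam a1 a2 a3 a4 a5 * gam b1 b2 b3 b4 b5 := by decide +kernel

lemma EE_zero {f : (ZMod 2)[X]} (hf : f ≠ 0) : EE f 0 = 1 := by
  have := monic_of_ne hf
  rw [Monic] at this
  simpa [EE] using this

lemma EE_one : EE 1 = fun k => if k = 0 then 1 else 0 := by
  have : (1 : (ZMod 2)[X]).reverse = 1 := by simpa using reverse_C (1 : ZMod 2)
  funext k
  simp [EE, this, coeff_one]

lemma cchi_mult (a b c : ℕ) : IsMult (cchi a b c) := by
  constructor
  · simp [cchi, EE_one, hh, chi, alp, bet, gam]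
  · intro f g hf hg
    have h : ∀ k, EE (f * g) k = ∑ i ∈ Finset.range (k + 1), EE f i * EE g (k - i) := by
      intro k
      rw [EE, reverse_mul_of_domain, coeff_mul, Finset.Nat.sum_antidiagonal_eq_sum_range_succ_mk]
      rfl
    have f0 := EE_zero hf
    have g0 := EE_zero hg
    have h1 : EE (f * g) 1 = EE f 1 + EE g 1 := by
      rw [h]; simp [Finset.sum_range_succ, f0, g0]; ring
    have h2 : EE (f * g) 2 = EE f 2 + EE f 1 * EE g 1 + EE g 2 := by
      rw [h]; simp [Finset.sum_range_succ, f0, g0]; ring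
    have h3 : EE (f * g) 3 = EE f 3 + EE f 2 * EE g 1 + EE f 1 * EE g 2 + EE g 3 := by
      rw [h]; simp [Finset.sum_range_succ, f0, g0]; ring
    have h4 : EE (f * g) 4 = EE f 4 + EE f 3 * EE g 1 + EE f 2 * EE g 2 + EE f 1 * EE g 3
        + EE g 4 := by
      rw [h]; simp [Finset.sum_range_succ, f0, g0]; ring
    have h5 : EE (f * g) 5 = EE f 5 + EE f 4 * EE g 1 + EE f 3 * EE g 2 + EE f 2 * EE g 3
        + EE f 1 * EE g 4 + EE g 5 := by
      rw [h]; simp [Finset.sum_range_succ, f0, g0]; ring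
    simp only [cchi, hh, chi, h1, h2, h3, h4, h5, alp_mul, bet_mul, gam_mul, mul_pow, map_mul]
    ring

lemma EE_step {m : ℕ} {g : (ZMod 2)[X]} (hg : g ∈ DD m) (b : ZMod 2) :
    EE (X * g + C b) = Function.update (EE g) (m + 1) b := by
  obtain ⟨h0, h1⟩ := mem_DD.1 hg
  have hr : (X * g + C b).reverse = g.reverse + C b * X ^ (m + 1) := by
    have h2 : (X * g).reverse = g.reverse := reverse_X_mul g
    have h3 : (X * g).natDegree = m + 1 := by rw [mul_comm, natDegree_mul_X h0, h1]
    rw [reverse, natDegree_step h0, h1, reflect_add, reflect_C, ← h2, reverse, h3]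
  funext k
  rw [EE, hr, coeff_add, coeff_C_mul_X_pow, Function.update_apply]
  split_ifs with hk
  · rw [coeff_eq_zero_of_natDegree_lt, zero_add]
    have := reverse_natDegree_le g
    omega
  · simp [EE]

def upd {A : Type*} [AddCommMonoid A] (m : ℕ) (G : (ℕ → ZMod 2) → A) (x : ℕ → ZMod 2) : A :=
  ∑ b : ZMod 2, G (Function.update x (m + 1) b)

lemma sumE {A : Type*} [AddCommMonoid A] (m : ℕ) (G : (ℕ → ZMod 2) → A) :
    ∑ f ∈ DD (m + 1), G (EE f) = ∑ g ∈ DD m, upd m G (EE g) := by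
  rw [sum_DD_succ]
  refine Finset.sum_congr rfl fun g hg => Finset.sum_congr rfl fun b _ => ?_
  rw [EE_step hg]

lemma sumE0 {A : Type*} [AddCommMonoid A] (G : (ℕ → ZMod 2) → A) :
    ∑ f ∈ DD 0, G (EE f) = G (fun k => if k = 0 then 1 else 0) := by
  rw [DD, Finset.sum_singleton, EE_one]

lemma cc_eq (a b c m : ℕ) : cc (cchi a b c) m =
    GaussianInt.toComplex (∑ f ∈ DD m, hh a b c (EE f)) := by
  simp [cc, cchi]

def cg (a b c : ℕ) : ℕ → GaussianInt
  | 0 => chi a b c 0 0 0 0 0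
  | 1 => ∑ e1 : ZMod 2, chi a b c e1 0 0 0 0
  | 2 => ∑ e1 : ZMod 2, ∑ e2 : ZMod 2, chi a b c e1 e2 0 0 0
  | 3 => ∑ e1 : ZMod 2, ∑ e2 : ZMod 2, ∑ e3 : ZMod 2, chi a b c e1 e2 e3 0 0
  | 4 => ∑ e1 : ZMod 2, ∑ e2 : ZMod 2, ∑ e3 : ZMod 2, ∑ e4 : ZMod 2, chi a b c e1 e2 e3 e4 0
  | _ => ∑ e1 : ZMod 2, ∑ e2 : ZMod 2, ∑ e3 : ZMod 2, ∑ e4 : ZMod 2, ∑ e5 : ZMod 2,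
      chi a b c e1 e2 e3 e4 e5

lemma sum_hh (a b c m : ℕ) (hm : m ≤ 5) : ∑ f ∈ DD m, hh a b c (EE f) = cg a b c m := by
  interval_cases m
  · rw [sumE0]; simp [hh, cg]
  · rw [sumE, sumE0]; simp only [upd, hh, cg]; simp [Function.update_apply]
  · rw [sumE, sumE, sumE0]; simp only [upd, hh, cg]; simp [Function.update_apply]
  · rw [sumE, sumE, sumE, sumE0]; simp only [upd, hh, cg]; simp [Function.update_apply]
  · rw [sumE, sumE, sumE, sumE, sumE0]; simp only [upd, hh, cg]; simp [Function.update_apply]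
  · rw [sumE, sumE, sumE, sumE, sumE, sumE0]; simp only [upd, hh, cg]; simp [Function.update_apply]

lemma sum_hh_zero (a b c : ℕ) (h5 : cg a b c 5 = 0) (m : ℕ) :
    ∑ f ∈ DD (m + 5), hh a b c (EE f) = 0 := by
  induction m with
  | zero => rw [sum_hh _ _ _ _ (by norm_num), h5]
  | succ m ih =>
    rw [show m + 1 + 5 = (m + 5) + 1 by ring, sumE]
    have : ∀ (x : ℕ → ZMod 2) (v : ZMod 2), hh a b c (Function.update x (m + 5 + 1) v) = hh a b c x := by
      intro x v
      simp [hh, Function.update_apply]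
    simp only [upd, this, Finset.sum_const]
    rw [← Finset.smul_sum, ih, smul_zero]

noncomputable def JJ : PowerSeries ℂ := PowerSeries.C Complex.I
lemma JJ_sq : JJ ^ 2 = -1 := by
  rw [JJ, ← map_pow, Complex.I_sq, map_neg, map_one]

noncomputable def tc (z : GaussianInt) : PowerSeries ℂ := (z.re : PowerSeries ℂ) + z.im * JJ

lemma tc_eq (z : GaussianInt) : tc z = PowerSeries.C (GaussianInt.toComplex z) := by
  rw [GaussianInt.toComplex_def]
  simp [tc, JJ]

noncomputable def FF (z0 z1 z2 z3 z4 : GaussianInt) : PowerSeries ℂ :=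
  tc z0 + tc z1 * PowerSeries.X + tc z2 * PowerSeries.X ^ 2 + tc z3 * PowerSeries.X ^ 3
    + tc z4 * PowerSeries.X ^ 4

lemma LD_chi (a b c : ℕ) (z0 z1 z2 z3 z4 : GaussianInt)
    (h : cg a b c 0 = z0 ∧ cg a b c 1 = z1 ∧ cg a b c 2 = z2 ∧ cg a b c 3 = z3 ∧
      cg a b c 4 = z4 ∧ cg a b c 5 = 0) :
    LD (FF z0 z1 z2 z3 z4) (PowerSeries.mk (SS (cchi a b c))) := by
  obtain ⟨h0, h1, h2, h3, h4, h5⟩ := h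
  have hF : FF z0 z1 z2 z3 z4 = PowerSeries.mk (cc (cchi a b c)) := by
    ext n
    simp only [FF, tc_eq, map_add, PowerSeries.coeff_C_mul, PowerSeries.coeff_mk,
      PowerSeries.coeff_C, PowerSeries.coeff_X, PowerSeries.coeff_X_pow, cc_eq]
    by_cases hn : n < 5
    · rw [sum_hh _ _ _ _ (by omega)]
      interval_cases n
      · simp [h0]
      · simp [h1]
      · simp [h2]
      · simp [h3]
      · simp [h4]
    · obtain ⟨m, rfl⟩ := Nat.exists_eq_add_of_le' (not_lt.1 hn)
      rw [sum_hh_zero _ _ _ h5]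
      simp
  rw [hF, LD]
  ext n
  have hr : PowerSeries.coeff n (PowerSeries.mk (cc (cchi a b c)) *
      PowerSeries.mk (SS (cchi a b c))) = (n : ℂ) * cc (cchi a b c) n := by
    rw [PowerSeries.coeff_mul, newton (cchi_mult a b c)]
    simp only [PowerSeries.coeff_mk]
  rw [hr]
  rcases n with _ | n
  · simp
  · rw [PowerSeries.coeff_succ_X_mul, PowerSeries.coeff_derivative]
    simp
    ring

lemma orth : ∀ e1 e2 e3 e4 e5 : ZMod 2, ∑ a ∈ Finset.range 4, ∑ b ∈ Finset.range 2,
    ∑ c ∈ Finset.range 2, chi a b c e1 e2 e3 e4 e5 =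
      if e1 = 0 ∧ e2 = 0 ∧ e3 = 0 ∧ e5 = 0 then 16 else 0 := by decide +kernel

lemma LD_eq {F G s t : PowerSeries ℂ} (hFG : F = G) (hF : PowerSeries.constantCoeff F = 1)
    (h1 : LD F s) (h2 : LD G t) : s = t := by
  subst hFG
  refine h1.unique ?_ h2
  rintro rfl
  simp at hF

lemma r001 : PowerSeries.mk (SS (cchi 0 0 1)) = (-rser d21) + (-rser d22) := by
  have h1 := LD_chi 0 0 1 ⟨1, 0⟩ ⟨2, 0⟩ ⟨4, 0⟩ ⟨4, 0⟩ ⟨4, 0⟩ (by decide +kernel)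
  refine LD_eq ?_ ?_ (h1) ((LD_d21).mul LD_d22)
  · simp [FF, tc]
    try ring
  · simp [FF, tc]
lemma r010 : PowerSeries.mk (SS (cchi 0 1 0)) = (-rser d21) := by
  have h1 := LD_chi 0 1 0 ⟨1, 0⟩ ⟨2, 0⟩ ⟨2, 0⟩ ⟨0, 0⟩ ⟨0, 0⟩ (by decide +kernel)
  refine LD_eq ?_ ?_ (h1) (LD_d21)
  · simp [FF, tc]
    try ring
  · simp [FF, tc]
lemma r011 : PowerSeries.mk (SS (cchi 0 1 1)) = (-rser d41) := by
  have h1 := LD_chi 0 1 1 ⟨1, 0⟩ ⟨2, 0⟩ ⟨2, 0⟩ ⟨4, 0⟩ ⟨4, 0⟩ (by decide +kernel)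
  refine LD_eq ?_ ?_ (h1) (LD_d41)
  · simp [FF, tc]
    try ring
  · simp [FF, tc]
lemma r100 : PowerSeries.mk (SS (cchi 1 0 0)) + PowerSeries.mk (SS (cchi 3 0 0)) = (-rser d21) := by
  have h1 := LD_chi 1 0 0 ⟨1, 0⟩ ⟨1, 1⟩ ⟨0, 0⟩ ⟨0, 0⟩ ⟨0, 0⟩ (by decide +kernel)
  have h2 := LD_chi 3 0 0 ⟨1, 0⟩ ⟨1, -1⟩ ⟨0, 0⟩ ⟨0, 0⟩ ⟨0, 0⟩ (by decide +kernel)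
  refine LD_eq ?_ ?_ (h1.mul h2) (LD_d21)
  · simp [FF, tc]
    linear_combination (-(1 * PowerSeries.X ^ 1) ^ 2) * JJ_sq
  · simp [FF, tc]
lemma r101 : PowerSeries.mk (SS (cchi 1 0 1)) + PowerSeries.mk (SS (cchi 3 0 1)) = (-rser d21) + (-rser d23) + (-rser d41) := by
  have h1 := LD_chi 1 0 1 ⟨1, 0⟩ ⟨1, 1⟩ ⟨0, 0⟩ ⟨2, -2⟩ ⟨4, 0⟩ (by decide +kernel)
  have h2 := LD_chi 3 0 1 ⟨1, 0⟩ ⟨1, -1⟩ ⟨0, 0⟩ ⟨2, 2⟩ ⟨4, 0⟩ (by decide +kernel)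
  refine LD_eq ?_ ?_ (h1.mul h2) (((LD_d21).mul LD_d23).mul LD_d41)
  · simp [FF, tc]
    linear_combination (-(1 * PowerSeries.X ^ 1 + -2 * PowerSeries.X ^ 3) ^ 2) * JJ_sq
  · simp [FF, tc]
lemma r110 : PowerSeries.mk (SS (cchi 1 1 0)) + PowerSeries.mk (SS (cchi 3 1 0)) = (-rser d41) := by
  have h1 := LD_chi 1 1 0 ⟨1, 0⟩ ⟨1, 1⟩ ⟨0, 2⟩ ⟨0, 0⟩ ⟨0, 0⟩ (by decide +kernel)
  have h2 := LD_chi 3 1 0 ⟨1, 0⟩ ⟨1, -1⟩ ⟨0, -2⟩ ⟨0, 0⟩ ⟨0, 0⟩ (by decide +kernel)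
  refine LD_eq ?_ ?_ (h1.mul h2) (LD_d41)
  · simp [FF, tc]
    linear_combination (-(1 * PowerSeries.X ^ 1 + 2 * PowerSeries.X ^ 2) ^ 2) * JJ_sq
  · simp [FF, tc]
lemma r111 : PowerSeries.mk (SS (cchi 1 1 1)) + PowerSeries.mk (SS (cchi 3 1 1)) = (-rser d83) := by
  have h1 := LD_chi 1 1 1 ⟨1, 0⟩ ⟨1, 1⟩ ⟨0, 2⟩ ⟨-2, 2⟩ ⟨-4, 0⟩ (by decide +kernel)
  have h2 := LD_chi 3 1 1 ⟨1, 0⟩ ⟨1, -1⟩ ⟨0, -2⟩ ⟨-2, -2⟩ ⟨-4, 0⟩ (by decide +kernel)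
  refine LD_eq ?_ ?_ (h1.mul h2) (LD_d83)
  · simp [FF, tc]
    linear_combination (-(1 * PowerSeries.X ^ 1 + 2 * PowerSeries.X ^ 2 + 2 * PowerSeries.X ^ 3) ^ 2) * JJ_sq
  · simp [FF, tc]
lemma r200 : PowerSeries.mk (SS (cchi 2 0 0)) = 0 := by
  have h1 := LD_chi 2 0 0 ⟨1, 0⟩ ⟨0, 0⟩ ⟨0, 0⟩ ⟨0, 0⟩ ⟨0, 0⟩ (by decide +kernel)
  refine LD_eq ?_ ?_ (h1) (LD_one)
  · simp [FF, tc]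
    try ring
  · simp [FF, tc]
lemma r201 : PowerSeries.mk (SS (cchi 2 0 1)) = (-rser d21) + (-rser d23) := by
  have h1 := LD_chi 2 0 1 ⟨1, 0⟩ ⟨0, 0⟩ ⟨0, 0⟩ ⟨0, 0⟩ ⟨4, 0⟩ (by decide +kernel)
  refine LD_eq ?_ ?_ (h1) ((LD_d21).mul LD_d23)
  · simp [FF, tc]
    try ring
  · simp [FF, tc]
lemma r210 : PowerSeries.mk (SS (cchi 2 1 0)) = (-rser d22) := by
  have h1 := LD_chi 2 1 0 ⟨1, 0⟩ ⟨0, 0⟩ ⟨2, 0⟩ ⟨0, 0⟩ ⟨0, 0⟩ (by decide +kernel)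
  refine LD_eq ?_ ?_ (h1) (LD_d22)
  · simp [FF, tc]
    try ring
  · simp [FF, tc]
lemma r211 : PowerSeries.mk (SS (cchi 2 1 1)) = (-rser d42) := by
  have h1 := LD_chi 2 1 1 ⟨1, 0⟩ ⟨0, 0⟩ ⟨2, 0⟩ ⟨0, 0⟩ ⟨4, 0⟩ (by decide +kernel)
  refine LD_eq ?_ ?_ (h1) (LD_d42)
  · simp [FF, tc]
    try ring
  · simp [FF, tc]


lemma key_sum (n : ℕ) (hn : n ≠ 0) :
    (∑ a ∈ Finset.range 4, ∑ b ∈ Finset.range 2, ∑ c ∈ Finset.range 2, SS (cchi a b c) n)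
      = SS (cchi 0 0 0) n - (5 * rho n d21 + 2 * rho n d22 + 2 * rho n d23 + 3 * rho n d41
            + rho n d42 + rho n d83) := by
  have h1 := congrArg (PowerSeries.coeff n) r001
  have h2 := congrArg (PowerSeries.coeff n) r010
  have h3 := congrArg (PowerSeries.coeff n) r011
  have h4 := congrArg (PowerSeries.coeff n) r100
  have h5 := congrArg (PowerSeries.coeff n) r101
  have h6 := congrArg (PowerSeries.coeff n) r110
  have h7 := congrArg (PowerSeries.coeff n) r111
  have h8 := congrArg (PowerSeries.coeff n) r200
  have h9 := congrArg (PowerSeries.coeff n) r201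
  have h10 := congrArg (PowerSeries.coeff n) r210
  have h11 := congrArg (PowerSeries.coeff n) r211
  simp only [map_add, map_neg, PowerSeries.coeff_mk, rser, if_neg hn, map_zero]
    at h1 h2 h3 h4 h5 h6 h7 h8 h9 h10 h11
  simp only [Finset.sum_range_succ, Finset.sum_range_zero, zero_add]
  linear_combination h1 + h2 + h3 + h4 + h5 + h6 + h7 + h8 + h9 + h10 + h11

theorem statement16 (n : ℕ) (hn : 5 ≤ n)
    (K : Type) [Field K] [Fintype K] (hK : Fintype.card K = 2 ^ n) :
    (Nat.card {a : K // traceFn 2 n 1 a = 0 ∧ traceFn 2 n 2 a = 0 ∧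
        traceFn 2 n 3 a = 0 ∧ traceFn 2 n 5 a = 0} : ℂ)
      = 2 ^ (n - 4) - (1 / 16) *
          (5 * rho n d21 + 2 * rho n d22 + 2 * rho n d23 + 3 * rho n d41
            + rho n d42 + rho n d83) := by
  classical
  have hn0 : n ≠ 0 := by omega
  have : CharP K 2 := by
    have h2 : Fact (Nat.Prime 2) := ⟨Nat.prime_two⟩
    exact charP_of_card_eq_prime_pow hK
  let _ : Algebra (ZMod 2) K := ZMod.algebra K 2
  have hT : ∀ (k : ℕ), k ≤ n → ∀ a : K, traceFn 2 n k a = 0 ↔ EE (qq n a) k = 0 := by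
    intro k hk a
    rw [← qq_trace hK hk a]
    exact map_eq_zero _
  have hcard : (Nat.card {a : K // traceFn 2 n 1 a = 0 ∧ traceFn 2 n 2 a = 0 ∧
        traceFn 2 n 3 a = 0 ∧ traceFn 2 n 5 a = 0} : ℂ) * 16 =
      ∑ a ∈ Finset.range 4, ∑ b ∈ Finset.range 2, ∑ c ∈ Finset.range 2, SS (cchi a b c) n := by
    rw [Nat.card_eq_fintype_card, Fintype.card_subtype, Finset.card_filter, Nat.cast_sum,
      Finset.sum_mul]
    have e : ∀ x : K, (((if traceFn 2 n 1 x = 0 ∧ traceFn 2 n 2 x = 0 ∧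
        traceFn 2 n 3 x = 0 ∧ traceFn 2 n 5 x = 0 then 1 else 0 : ℕ) : ℂ)) * 16 =
        ∑ a ∈ Finset.range 4, ∑ b ∈ Finset.range 2, ∑ c ∈ Finset.range 2,
          cchi a b c (qq n x) := by
      intro x
      have h := congrArg GaussianInt.toComplex (orth (EE (qq n x) 1) (EE (qq n x) 2)
        (EE (qq n x) 3) (EE (qq n x) 4) (EE (qq n x) 5))
      simp only [map_sum] at h
      simp only [cchi, hh]
      rw [h, hT 1 (by omega), hT 2 (by omega), hT 3 (by omega), hT 5 (by omega)]
      split_ifs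
      · rw [map_ofNat]; simp
      · simp
    rw [Finset.sum_congr rfl fun x _ => e x, Finset.sum_comm]
    refine Finset.sum_congr rfl fun a _ => ?_
    rw [Finset.sum_comm]
    refine Finset.sum_congr rfl fun b _ => ?_
    rw [Finset.sum_comm]
    refine Finset.sum_congr rfl fun c _ => ?_
    exact sum_minpoly hn0 hK (cchi_mult a b c)
  have h0 : SS (cchi 0 0 0) n = 2 ^ (n - 4) * 16 := by
    rw [← sum_minpoly hn0 hK (cchi_mult 0 0 0)]
    have : ∀ f, cchi 0 0 0 f = 1 := by intro f; simp [cchi, hh, chi]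
    simp only [this, Finset.sum_const, Finset.card_univ, hK]
    have h4 : (2 : ℂ) ^ n = 2 ^ (n - 4) * 2 ^ 4 := by rw [← pow_add]; congr 1; omega
    simp only [nsmul_eq_mul, mul_one]
    push_cast
    rw [h4]; norm_num
  rw [key_sum n hn0, h0] at hcard
  linear_combination hcard / 16
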